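/- For every integer n ≥ 1, the number of order ideals of the four-color tetrahedral poset T_n({r,g,o,y}) is given by the same product formula: |J(T_n({r,g,o,y}))| · ∏_{j=0}^{n−1} (n+j)! = ∏_{j=0}^{n−1} (3j+1)!. -/

import Mathlib

open scoped Classical

noncomputable section

/-- `V3 n` is the set `{(a,b,c) ∈ ℤ≥0³ : a + b + c ≤ n - 2}`. -/
def V3 (n : ℕ) : Finset (ℤ × ℤ × ℤ) :=
  ((Finset.Icc (0:ℤ) (n:ℤ) ×ˢ Finset.Icc (0:ℤ) (n:ℤ) ×ˢ Finset.Icc (0:ℤ) (n:ℤ)).filter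
    (fun p => p.1 + p.2.1 + p.2.2 ≤ (n:ℤ) - 2))

/-- The six edge vectors. -/
def vr : ℤ × ℤ × ℤ := (1,0,0)
def vg : ℤ × ℤ × ℤ := (0,1,0)
def vy : ℤ × ℤ × ℤ := (0,0,1)
def vb : ℤ × ℤ × ℤ := (-1,1,0)
def vo : ℤ × ℤ × ℤ := (-1,0,1)
def vs : ℤ × ℤ × ℤ := (0,1,-1)

/-- One step: add a vector of `S`, staying inside `W`. -/
def step3 (S : Set (ℤ × ℤ × ℤ)) (W : Finset (ℤ × ℤ × ℤ)) (u v : ℤ × ℤ × ℤ) : Prop :=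
  u ∈ W ∧ v ∈ W ∧ ∃ e ∈ S, v = u + e

/-- The order relation of `T_n(S)`: reflexive-transitive closure of `step3`,
restricted to `W`. -/
def le3 (S : Set (ℤ × ℤ × ℤ)) (W : Finset (ℤ × ℤ × ℤ)) (u v : ℤ × ℤ × ℤ) : Prop :=
  u ∈ W ∧ v ∈ W ∧ Relation.ReflTransGen (step3 S W) u v

/-- An order ideal: a downward closed subset of `W`. -/
def IsIdeal3 (S : Set (ℤ × ℤ × ℤ)) (W : Finset (ℤ × ℤ × ℤ))
    (I : Finset (ℤ × ℤ × ℤ)) : Prop :=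
  I ⊆ W ∧ ∀ u v : ℤ × ℤ × ℤ, le3 S W u v → v ∈ I → u ∈ I

/-- The set of all order ideals of `T_n(S)`. -/
def ideals3 (S : Set (ℤ × ℤ × ℤ)) (W : Finset (ℤ × ℤ × ℤ)) :
    Finset (Finset (ℤ × ℤ × ℤ)) :=
  W.powerset.filter (fun I => IsIdeal3 S W I)

/-- The rank generating function `F(J(T_n(S)),q) = Σ_{I} q^{|I|}`. -/
def genF3 (S : Set (ℤ × ℤ × ℤ)) (W : Finset (ℤ × ℤ × ℤ)) : Polynomial ℤ :=
  ∑ I ∈ ideals3 S W, Polynomial.X ^ I.card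

end

/-- The sign of the permutation sorting `s` into decreasing order, `0` if `s` has a repetition. -/
def descSign {n : ℕ} (s : Fin n → ℤ) : ℤ :=
  ∏ i, ∏ j ∈ Finset.Ioi i, (s i - s j).sign

lemma descSign_eq_sign_det {n : ℕ} (s : Fin n → ℤ) :
    descSign s = (Matrix.vandermonde (fun i => -s i)).det.sign := by
  have hsign : ∀ {α : Type} (t : Finset α) (f : α → ℤ),
      ∏ a ∈ t, (f a).sign = (∏ a ∈ t, f a).sign := by
    intro α t f
    induction t using Finset.cons_induction with
    | empty => simp
    | cons a t ha ih => rw [Finset.prod_cons, Finset.prod_cons, Int.sign_mul, ih]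
  simp only [Matrix.det_vandermonde, descSign, hsign, neg_sub_neg]

lemma descSign_comp_perm {n : ℕ} (s : Fin n → ℤ) (σ : Equiv.Perm (Fin n)) :
    descSign (s ∘ σ) = Equiv.Perm.sign σ * descSign s := by
  rw [descSign_eq_sign_det, descSign_eq_sign_det]
  have h : Matrix.vandermonde (fun i => -(s ∘ σ) i)
      = (Matrix.vandermonde (fun i => -s i)).submatrix σ id := by
    ext i j; simp [Matrix.vandermonde]
  rw [h, Matrix.det_permute, Int.sign_mul]
  rcases Int.units_eq_one_or (Equiv.Perm.sign σ) with h | h <;> simp [h]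

lemma descSign_cons {n : ℕ} (t : ℤ) (s : Fin n → ℤ) :
    descSign (Fin.cons t s : Fin (n + 1) → ℤ) = (∏ j, (t - s j).sign) * descSign s := by
  simp [descSign, Fin.prod_univ_succ, Fin.prod_Ioi_succ]

lemma descSign_of_strictAnti {n : ℕ} {s : Fin n → ℤ} (hs : StrictAnti s) : descSign s = 1 := by
  refine Finset.prod_eq_one fun i _ => Finset.prod_eq_one fun j hj => ?_
  exact Int.sign_eq_one_of_pos (sub_pos.2 (hs (Finset.mem_Ioi.1 hj)))

lemma descSign_removeNth {n : ℕ} {s : Fin (n + 1) → ℤ} (hs : Function.Injective s)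
    (i : Fin (n + 1)) :
    (-1) ^ (i : ℕ) * descSign (i.removeNth s) =
      descSign s * ∏ j, (s i - s (i.succAbove j)).sign := by
  have h1 : descSign s = (-1) ^ (i : ℕ) *
      ((∏ j, (s i - s (i.succAbove j)).sign) * descSign (i.removeNth s)) := by
    have h := descSign_comp_perm (Fin.cons (s i) (i.removeNth s) : Fin (n + 1) → ℤ)
      (Fin.cycleRange i)
    rw [Fin.cons_comp_cycleRange, Fin.insertNth_self_removeNth, descSign_cons] at h
    rw [h]
    simp [Fin.removeNth]
  have h2 : (∏ j, (s i - s (i.succAbove j)).sign) * (∏ j, (s i - s (i.succAbove j)).sign) = 1 := by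
    rw [← Finset.prod_mul_distrib]
    refine Finset.prod_eq_one fun j _ => ?_
    have hne : s i - s (i.succAbove j) ≠ 0 :=
      sub_ne_zero.2 fun h => Fin.succAbove_ne i j (hs h).symm
    rcases lt_or_gt_of_ne hne with h | h
    · simp [Int.sign_eq_neg_one_of_neg h]
    · simp [Int.sign_eq_one_of_pos h]
  rw [h1]
  linear_combination (-(-1) ^ (i : ℕ) * descSign (i.removeNth s)) * h2

lemma sum_one_add_sign_mul_prod_erase (S : Finset ℤ) (t : ℤ) :
    ∑ x ∈ S, (1 + (t - x).sign) * ∏ y ∈ S.erase x, (x - y).sign =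
      ∏ x ∈ S, (t - x).sign - (-1) ^ S.card := by
  induction S using Finset.induction_on_max with
  | empty => simp
  | insert M S hM ih =>
    have hMS : M ∉ S := fun h => lt_irrefl _ (hM M h)
    rw [Finset.sum_insert hMS, Finset.prod_insert hMS, Finset.card_insert_of_notMem hMS,
      Finset.erase_insert hMS]
    have h1 : ∏ y ∈ S, (M - y).sign = 1 :=
      Finset.prod_eq_one fun y hy => Int.sign_eq_one_of_pos (sub_pos.2 (hM y hy))
    have h2 : ∑ x ∈ S, (1 + (t - x).sign) * ∏ y ∈ (insert M S).erase x, (x - y).sign =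
        -∑ x ∈ S, (1 + (t - x).sign) * ∏ y ∈ S.erase x, (x - y).sign := by
      rw [← Finset.sum_neg_distrib]
      refine Finset.sum_congr rfl fun x hx => ?_
      have hne : M ≠ x := fun h => hMS (h ▸ hx)
      rw [Finset.erase_insert_of_ne hne, Finset.prod_insert (by simp [hMS]),
        Int.sign_eq_neg_one_of_neg (sub_neg.2 (hM x hx))]
      ring
    rw [h1, h2, ih]
    have h3 : M ≤ t → ∏ x ∈ S, (t - x).sign = 1 := fun h =>
      Finset.prod_eq_one fun y hy => Int.sign_eq_one_of_pos (sub_pos.2 ((hM y hy).trans_le h))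
    rcases lt_trichotomy t M with h | h | h
    · rw [Int.sign_eq_neg_one_of_neg (sub_neg.2 h)]; ring
    · rw [h3 h.ge, h]; simp; ring
    · rw [h3 h.le, Int.sign_eq_one_of_pos (sub_pos.2 h)]; ring

lemma sum_one_add_sign_mul_descSign_removeNth {n : ℕ} {s : Fin (n + 1) → ℤ}
    (hs : Function.Injective s) (t : ℤ) :
    ∑ i : Fin (n + 1), (-1) ^ (i : ℕ) * ((1 + (t - s i).sign) * descSign (i.removeNth s)) =
      descSign (Fin.cons t s : Fin (n + 2) → ℤ) - (-1) ^ (n + 1) * descSign s := by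
  have key := sum_one_add_sign_mul_prod_erase (Finset.univ.map ⟨s, hs⟩) t
  rw [Finset.sum_map, Finset.prod_map, Finset.card_map, Finset.card_univ, Fintype.card_fin] at key
  simp only [Function.Embedding.coeFn_mk] at key
  rw [descSign_cons, ← sub_mul, ← key, Finset.sum_mul]
  refine Finset.sum_congr rfl fun i _ => ?_
  have h : (Finset.univ.map ⟨s, hs⟩).erase (s i) =
      (Finset.univ.map (Fin.succAboveEmb i)).map ⟨s, hs⟩ := by
    ext x
    simp only [Finset.mem_erase, Finset.mem_map, Finset.mem_univ, true_and,
      Function.Embedding.coeFn_mk, Fin.succAboveEmb_apply]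
    constructor
    · rintro ⟨hx, j, rfl⟩
      obtain ⟨k, hk⟩ := Fin.exists_succAbove_eq (x := j) (y := i) (fun h => hx (h ▸ rfl))
      exact ⟨j, ⟨k, hk⟩, rfl⟩
    · rintro ⟨j, ⟨k, rfl⟩, rfl⟩
      exact ⟨fun h => Fin.succAbove_ne i k (hs h), _, rfl⟩
  rw [h, Finset.prod_map, Finset.prod_map]
  have := descSign_removeNth hs i
  simp only [Function.Embedding.coeFn_mk, Fin.succAboveEmb_apply]
  linear_combination (1 + (t - s i).sign) * this

noncomputable section

/-- The alternating form whose value at a family of basis vectors is `descSign` of the indices: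
the sum of the maximal minors of the matrix of coordinates. -/
def minorSum (m n : ℕ) : (Fin m → ℚ) [⋀^Fin n]→ₗ[ℚ] ℚ where
  toMultilinearMap := ∑ s : Fin n → Fin m, ((descSign fun i => ((s i : ℕ) : ℤ) : ℤ) : ℚ) •
    (MultilinearMap.mkPiAlgebra ℚ (Fin n) ℚ).compLinearMap (fun i => LinearMap.proj (s i))
  map_eq_zero_of_eq' := by
    intro v i j hv hij
    suffices h : ∑ s : Fin n → Fin m, ((descSign fun i => ((s i : ℕ) : ℤ) : ℤ) : ℚ) *
        ∏ k, v k (s k) = 0 by simpa using h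
    refine Finset.sum_involution (fun s _ => s ∘ Equiv.swap i j) ?_ ?_ (by simp) ?_
    · intro s _
      have h1 : (fun k => (((s ∘ Equiv.swap i j) k : ℕ) : ℤ)) =
        (fun k => ((s k : ℕ) : ℤ)) ∘ Equiv.swap i j := rfl
      have h2 : ∏ k, v k ((s ∘ Equiv.swap i j) k) = ∏ k, v k (s k) := by
        rw [← Equiv.prod_comp (Equiv.swap i j)]
        refine Finset.prod_congr rfl fun k _ => ?_
        simp only [Function.comp_apply, Equiv.swap_apply_self]
        suffices h : v (Equiv.swap i j k) = v k by rw [h]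
        by_cases hki : k = i
        · subst hki; simp [hv]
        · by_cases hkj : k = j
          · subst hkj; simp [hv]
          · rw [Equiv.swap_apply_of_ne_of_ne hki hkj]
      rw [h1, descSign_comp_perm, h2, Equiv.Perm.sign_swap hij]
      push_cast
      ring
    · intro s _ hs heq
      apply hs
      have h1 : descSign (fun k => ((s k : ℕ) : ℤ)) = -descSign (fun k => ((s k : ℕ) : ℤ)) := by
        conv_lhs => rw [← heq]
        have := descSign_comp_perm (fun k => ((s k : ℕ) : ℤ)) (Equiv.swap i j)
        rw [Equiv.Perm.sign_swap hij] at this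
        exact this.trans (by simp)
      have h2 : descSign (fun k => ((s k : ℕ) : ℤ)) = 0 := by omega
      simp [h2]
    · intro s _
      ext k
      simp

lemma minorSum_apply {m n : ℕ} (v : Fin n → Fin m → ℚ) :
    minorSum m n v = ∑ s : Fin n → Fin m, ((descSign fun i => ((s i : ℕ) : ℤ) : ℤ) : ℚ) *
        ∏ k, v k (s k) := by
  simp [minorSum, ← AlternatingMap.coe_multilinearMap]

lemma minorSum_single {m n : ℕ} (s : Fin n → Fin m) :
    minorSum m n (fun i => Pi.single (s i) 1) = ((descSign fun i => ((s i : ℕ) : ℤ) : ℤ) : ℚ) := by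
  rw [minorSum_apply, Finset.sum_eq_single s]
  · simp
  · intro b _ hb
    obtain ⟨k, hk⟩ := Function.ne_iff.1 hb
    rw [Finset.prod_eq_zero (Finset.mem_univ k), mul_zero]
    simp [hk]
  · simp

/-- The bilinear form with matrix `1` on the diagonal, `2` above it and `0` below it. -/
def upperForm (m : ℕ) : (Fin m → ℚ) →ₗ[ℚ] (Fin m → ℚ) →ₗ[ℚ] ℚ :=
  Matrix.toLinearMap₂' ℚ (Matrix.of fun s t : Fin m => ((1 + ((t : ℤ) - (s : ℤ)).sign : ℤ) : ℚ))

/-- The sum of the coordinates. -/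
def coordSum (m : ℕ) : (Fin m → ℚ) →ₗ[ℚ] ℚ := ∑ s, LinearMap.proj s

lemma upperForm_single {m : ℕ} (s t : Fin m) :
    upperForm m (Pi.single s 1) (Pi.single t 1) = ((1 + ((t : ℤ) - (s : ℤ)).sign : ℤ) : ℚ) := by
  simp [upperForm, Matrix.toLinearMap₂'_apply']

lemma coordSum_single {m : ℕ} (t : Fin m) : coordSum m (Pi.single t 1) = 1 := by
  simp [coordSum, LinearMap.sum_apply]

lemma sum_upperForm_mul_minorSum_removeNth {m n : ℕ} (w : Fin (n + 1) → Fin m → ℚ)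
    (q : Fin m → ℚ) :
    ∑ i : Fin (n + 1), (-1) ^ (i : ℕ) * (upperForm m (w i) q * minorSum m n (i.removeNth w)) =
      minorSum m (n + 2) (Matrix.vecCons q w) -
        (-1) ^ (n + 1) * (coordSum m q * minorSum m (n + 1) w) := by
  let R : (Fin m → ℚ) →ₗ[ℚ] (Fin m → ℚ) [⋀^Fin (n + 1)]→ₗ[ℚ] ℚ :=
    (minorSum m (n + 2)).curryLeft -
      ((-1) ^ (n + 1) : ℚ) • (coordSum m).smulRight (minorSum m (n + 1))
  let L : (Fin m → ℚ) →ₗ[ℚ] (Fin m → ℚ) [⋀^Fin (n + 1)]→ₗ[ℚ] ℚ :=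
    AlternatingMap.alternatizeUncurryFinLM ∘ₗ
      (LinearMap.smulRightₗ.flip (minorSum m n)) ∘ₗ (upperForm m).flip
  have hL : ∀ q w, L q w = ∑ i : Fin (n + 1),
      (-1) ^ (i : ℕ) * (upperForm m (w i) q * minorSum m n (i.removeNth w)) := by
    intro q w
    simp [L, AlternatingMap.alternatizeUncurryFin_apply]
  have hR : ∀ q w, R q w = minorSum m (n + 2) (Matrix.vecCons q w) -
        (-1) ^ (n + 1) * (coordSum m q * minorSum m (n + 1) w) := by
    intro q w
    simp [R]
  have hLR : L = R := by
    refine (Pi.basisFun ℚ (Fin m)).ext fun t => ?_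
    refine (Pi.basisFun ℚ (Fin m)).ext_alternating fun s hs => ?_
    have hs' : Function.Injective (fun i => ((s i : ℕ) : ℤ)) := fun a b h => hs (by
      simpa [Fin.ext_iff] using h)
    have key := congrArg (Int.cast : ℤ → ℚ)
      (sum_one_add_sign_mul_descSign_removeNth hs' ((t : ℕ) : ℤ))
    have h1 : Matrix.vecCons (Pi.single t (1 : ℚ)) (fun i => Pi.single (s i) (1 : ℚ)) =
        fun i => (Pi.single (Matrix.vecCons t s i) 1 : Fin m → ℚ) := by
      ext i : 1
      refine Fin.cases ?_ (fun i => ?_) i <;> simp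
    have h2 : (fun i => (((Matrix.vecCons t s i : Fin m) : ℕ) : ℤ)) =
        Fin.cons ((t : ℕ) : ℤ) (fun i => ((s i : ℕ) : ℤ)) := by
      ext i : 1
      refine Fin.cases ?_ (fun i => ?_) i <;> simp
    rw [hL, hR]
    simp only [Pi.basisFun_apply]
    rw [h1, minorSum_single, minorSum_single, coordSum_single, h2, one_mul]
    push_cast at key
    rw [← key]
    refine Finset.sum_congr rfl fun i _ => ?_
    have h3 : i.removeNth (fun j => (Pi.single (s j) (1 : ℚ) : Fin m → ℚ)) =
      fun j => Pi.single (i.removeNth s j) (1 : ℚ) := rfl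
    rw [upperForm_single, h3, minorSum_single]
    push_cast
    rfl
  rw [← hL, ← hR, hLR]

end

section Hypergeometric

open Nat in
/-- The reciprocal factorial `1 / z!`, extended by `0` to negative integers. -/
noncomputable def invFact (z : ℤ) : ℚ := if 0 ≤ z then ((z.toNat ! : ℕ) : ℚ)⁻¹ else 0

lemma invFact_natCast (k : ℕ) : invFact k = ((k.factorial : ℕ) : ℚ)⁻¹ := by
  simp [invFact]

lemma invFact_of_neg {z : ℤ} (hz : z < 0) : invFact z = 0 := by
  simp [invFact, not_le.2 hz]

lemma invFact_sub_one (z : ℤ) : invFact (z - 1) = z * invFact z := by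
  rcases lt_trichotomy z 0 with h | h | h
  · rw [invFact_of_neg h, invFact_of_neg (by omega), mul_zero]
  · subst h; simp [invFact_of_neg]
  · obtain ⟨k, rfl⟩ : ∃ k : ℕ, z = k + 1 := ⟨(z - 1).toNat, by omega⟩
    have h1 : ((k : ℤ) + 1 - 1) = (k : ℤ) := by ring
    have h2 : ((k : ℤ) + 1) = ((k + 1 : ℕ) : ℤ) := by push_cast; ring
    rw [h1, h2, invFact_natCast, invFact_natCast, Nat.factorial_succ]
    have := Nat.factorial_ne_zero k
    push_cast
    field_simp

lemma choose_eq_factorial_mul_invFact (N k : ℕ) :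
    (N.choose k : ℚ) = N.factorial * (invFact k * invFact (N - k)) := by
  rcases le_or_gt k N with h | h
  · have h1 : ((N : ℤ) - k) = ((N - k : ℕ) : ℤ) := by omega
    rw [Nat.cast_choose ℚ h, h1, invFact_natCast, invFact_natCast]
    field_simp
  · rw [Nat.choose_eq_zero_of_lt h, invFact_of_neg (z := (N : ℤ) - k) (by omega)]
    simp

/-- The coefficients of the combination of the `shiftedPow j` orthogonal to lower powers. -/
noncomputable def orthCoeff (n j : ℕ) : ℚ :=
  (-1) ^ j * j.centralBinom * ((n + j).factorial * (2 * n - j).factorial) *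
    invFact (n - j) * ((2 * n + j + 1).factorial : ℚ)⁻¹

/-- The closed form of the Gram matrix, see `upperForm_pow_shiftedPow`. -/
noncomputable def gramEntry (i j : ℕ) : ℚ :=
  (3 * j + 1) * (i + j).factorial * (invFact (2 * i - j + 1) * invFact (2 * j - i))

/-- The telescoping certificate for the recurrence in `i` of
`∑ j, orthCoeff n j * gramEntry i j`. -/
noncomputable def gramCert (n i j : ℕ) : ℚ :=
  (3 * i + 4) * ((-1) ^ j * (j * j.centralBinom) * ((n + j).factorial * (2 * n + 1 - j).factorial) *
    invFact (n - j) * ((2 * n + j).factorial : ℚ)⁻¹) *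
      ((i + j).factorial * (invFact (2 * i - j + 3) * invFact (2 * j - i - 2)))

lemma gramCert_telescope {n i j : ℕ} (hn : 1 ≤ n) (hj : j ≤ n) :
    orthCoeff n j * (2 * (i + 1 - n) * (2 * i + 3) * (n + i + 2) * gramEntry (i + 1) j -
      (2 * n - i) * (i + 1) * (2 * n + i + 2) * gramEntry i j) =
      gramCert n i (j + 1) - gramCert n i j := by
  have hA1 : invFact (2 * i - j + 2) = (2 * i - j + 3) * invFact (2 * i - j + 3) := by
    have := invFact_sub_one (2 * i - j + 3)
    push_cast at this
    rw [← this]; congr 1; ring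
  have hA2 : invFact (2 * i - j + 1) = (2 * i - j + 2) * invFact (2 * i - j + 2) := by
    have := invFact_sub_one (2 * i - j + 2)
    push_cast at this
    rw [← this]; congr 1; ring
  have hB1 : invFact (2 * j - i - 1) = (2 * j - i) * invFact (2 * j - i) := by
    have := invFact_sub_one (2 * j - i)
    push_cast at this
    rw [← this]
  have hB2 : invFact (2 * j - i - 2) = (2 * j - i - 1) * invFact (2 * j - i - 1) := by
    have := invFact_sub_one (2 * j - i - 1)
    push_cast at this
    rw [← this]; congr 1; ring
  have hD : invFact (n - j - 1) = (n - j) * invFact (n - j) := by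
    have := invFact_sub_one (n - j)
    push_cast at this
    rw [← this]
  have hC : ((j : ℚ) + 1) * (j + 1).centralBinom = 2 * (2 * j + 1) * j.centralBinom := by
    exact_mod_cast Nat.succ_mul_centralBinom_succ j
  have hE : ((2 * n + 1 - j).factorial : ℚ) = (2 * n + 1 - j) * (2 * n - j).factorial := by
    rw [show 2 * n + 1 - j = (2 * n - j) + 1 by omega, Nat.factorial_succ]
    push_cast [Nat.cast_sub (show j ≤ 2 * n by omega)]
    ring
  have hG : ((2 * n + j).factorial : ℚ)⁻¹ = (2 * n + j + 1) * ((2 * n + j + 1).factorial : ℚ)⁻¹ := by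
    rw [Nat.factorial_succ]
    have := Nat.factorial_ne_zero (2 * n + j)
    push_cast
    field_simp
  have e1 : (2 * ((i + 1 : ℕ) : ℤ) - j + 1) = 2 * i - j + 3 := by push_cast; ring
  have e2 : (2 * (j : ℤ) - ((i + 1 : ℕ) : ℤ)) = 2 * j - i - 1 := by push_cast; ring
  have e3 : ((n : ℤ) - ((j + 1 : ℕ) : ℤ)) = n - j - 1 := by push_cast; ring
  have e4 : (2 * (i : ℤ) - ((j + 1 : ℕ) : ℤ) + 3) = 2 * i - j + 2 := by push_cast; ring
  have e5 : (2 * ((j + 1 : ℕ) : ℤ) - i - 2) = 2 * j - i := by push_cast; ring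
  have e6 : ((i + 1 + j).factorial : ℚ) = (i + j + 1) * (i + j).factorial := by
    rw [show i + 1 + j = (i + j) + 1 by ring, Nat.factorial_succ]; push_cast; ring
  have e7 : ((i + (j + 1)).factorial : ℚ) = (i + j + 1) * (i + j).factorial := by
    rw [show i + (j + 1) = (i + j) + 1 by ring, Nat.factorial_succ]; push_cast; ring
  have e8 : ((n + (j + 1)).factorial : ℚ) = (n + j + 1) * (n + j).factorial := by
    rw [show n + (j + 1) = (n + j) + 1 by ring, Nat.factorial_succ]; push_cast; ring
  have e9 : 2 * n + 1 - (j + 1) = 2 * n - j := by omega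
  unfold orthCoeff gramEntry gramCert
  rw [e1, e2, e3, e4, e5, e6, e7, e8, e9, hE, hG, hB2, hB1, hA2, hA1, hD, ← add_assoc (2 * n) j 1]
  push_cast
  rw [hC]
  ring

lemma sum_orthCoeff_mul_gramEntry_succ {n : ℕ} (hn : 1 ≤ n) (i : ℕ) :
    2 * (i + 1 - n) * (2 * i + 3) * (n + i + 2) *
        ∑ j ∈ Finset.range (n + 1), orthCoeff n j * gramEntry (i + 1) j =
      (2 * n - i) * (i + 1) * (2 * n + i + 2) *
        ∑ j ∈ Finset.range (n + 1), orthCoeff n j * gramEntry i j := by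
  have h : ∑ j ∈ Finset.range (n + 1), (gramCert n i (j + 1) - gramCert n i j) = 0 := by
    rw [Finset.sum_range_sub]
    have h1 : gramCert n i (n + 1) = 0 := by
      rw [gramCert, invFact_of_neg (z := (n : ℤ) - ((n + 1 : ℕ) : ℤ)) (by push_cast; omega)]
      ring
    have h2 : gramCert n i 0 = 0 := by simp [gramCert]
    rw [h1, h2, sub_zero]
  rw [← sub_eq_zero, Finset.mul_sum, Finset.mul_sum, ← Finset.sum_sub_distrib, ← h]
  refine Finset.sum_congr rfl fun j hj => ?_
  rw [← gramCert_telescope hn (by simpa [Nat.lt_succ_iff] using hj)]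
  ring

lemma sum_orthCoeff_mul_gramEntry_zero {n : ℕ} (hn : 1 ≤ n) :
    ∑ j ∈ Finset.range (n + 1), orthCoeff n j * gramEntry 0 j = 0 := by
  obtain ⟨k, rfl⟩ : ∃ k, n = k + 1 := ⟨n - 1, by omega⟩
  rw [Finset.sum_range_succ', Finset.sum_range_succ', Finset.sum_eq_zero]
  · have h0 : gramEntry 0 0 = 1 := by simp [gramEntry, invFact]
    have h1 : gramEntry 0 1 = 2 := by
      norm_num [gramEntry, invFact, show Int.toNat 2 = 2 from rfl, Nat.factorial]
    have hD : invFact (((k + 1 : ℕ) : ℤ) - ((0 + 1 : ℕ) : ℤ)) =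
        (k + 1) * invFact (((k + 1 : ℕ) : ℤ) - ((0 : ℕ) : ℤ)) := by
      have := invFact_sub_one (k + 1)
      push_cast at this ⊢
      simpa using this
    rw [zero_add, h0, h1, orthCoeff, orthCoeff, ← zero_add 1, hD]
    have e1 : (k + 1 + (0 + 1)).factorial = (k + 2) * (k + 1).factorial := Nat.factorial_succ _
    have e2 : (2 * (k + 1) - 0).factorial = (2 * k + 2) * (2 * (k + 1) - (0 + 1)).factorial :=
      Nat.factorial_succ _
    have e3 : (2 * (k + 1) + (0 + 1) + 1).factorial = (2 * k + 4) * (2 * (k + 1) + 0 + 1).factorial :=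
      Nat.factorial_succ _
    have hne := Nat.factorial_ne_zero (2 * (k + 1) + 0 + 1)
    rw [e1, e2, e3]
    simp only [zero_add, Nat.centralBinom_zero, show Nat.centralBinom 1 = 2 from rfl, add_zero]
      at hne ⊢
    push_cast
    field_simp
    ring
  · intro j _
    rw [gramEntry, invFact_of_neg (z := 2 * ((0 : ℕ) : ℤ) - ((j + 1 + 1 : ℕ) : ℤ) + 1)
      (by push_cast; omega)]
    ring

lemma sum_orthCoeff_mul_gramEntry {n i : ℕ} (hi : i < n) :
    ∑ j ∈ Finset.range (n + 1), orthCoeff n j * gramEntry i j = 0 := by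
  induction i with
  | zero => exact sum_orthCoeff_mul_gramEntry_zero hi
  | succ i ih =>
    have h := sum_orthCoeff_mul_gramEntry_succ (n := n) (by omega) i
    rw [ih (by omega), mul_zero] at h
    refine (mul_eq_zero.1 h).resolve_left ?_
    have h1 : (i : ℚ) + 1 - n ≠ 0 := by
      have : (i : ℚ) + 1 < n := by exact_mod_cast hi
      linarith
    have h2 : (2 * (i : ℚ) + 3) ≠ 0 := by positivity
    have h3 : ((n : ℚ) + i + 2) ≠ 0 := by positivity
    simp [h1, h2, h3]

end Hypergeometric

section Polynomials

open Polynomial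

/-- The vector of the first `m` coefficients of a polynomial. -/
noncomputable def coeffVec (m : ℕ) : ℚ[X] →ₗ[ℚ] (Fin m → ℚ) :=
  LinearMap.pi fun s => Polynomial.lcoeff ℚ s

lemma coeffVec_apply (m : ℕ) (p : ℚ[X]) (s : Fin m) : coeffVec m p s = p.coeff s := rfl

lemma coeffVec_X_pow {m k : ℕ} (hk : k < m) :
    coeffVec m (X ^ k) = Pi.single (⟨k, hk⟩ : Fin m) 1 := by
  ext s
  simp [coeffVec_apply, coeff_X_pow, Pi.single_apply, Fin.ext_iff]

lemma upperForm_coeffVec (m : ℕ) (p q : ℚ[X]) :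
    upperForm m (coeffVec m p) (coeffVec m q) = ∑ s ∈ Finset.range m, p.coeff s *
      ∑ t ∈ Finset.range m, ((1 + ((t : ℤ) - (s : ℤ)).sign : ℤ) : ℚ) * q.coeff t := by
  rw [upperForm, Matrix.toLinearMap₂'_apply, Finset.sum_range]
  refine Finset.sum_congr rfl fun s _ => ?_
  rw [Finset.sum_range, Finset.mul_sum]
  refine Finset.sum_congr rfl fun t _ => ?_
  simp only [coeffVec_apply, Matrix.of_apply, smul_eq_mul]
  ring

lemma sum_one_add_sign_mul_coeff (h : ℚ[X]) (s N : ℕ) :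
    ∑ t ∈ Finset.range (N + 1), ((1 + ((t : ℤ) - (s : ℤ)).sign : ℤ) : ℚ) *
        ((X - 1) * h).coeff t =
      ∑ t ∈ Finset.range N, ((if t = s then 1 else 0) + if t + 1 = s then 1 else 0) * h.coeff t -
        ((1 + ((N : ℤ) - (s : ℤ)).sign : ℤ) : ℚ) * h.coeff N := by
  induction N with
  | zero => simp [sub_mul]
  | succ N ih =>
    rw [Finset.sum_range_succ, ih, Finset.sum_range_succ _ N, sub_mul, one_mul, coeff_sub,
      coeff_X_mul]
    have hU : ((1 + (((N + 1 : ℕ) : ℤ) - (s : ℤ)).sign : ℤ) : ℚ) =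
        ((1 + ((N : ℤ) - (s : ℤ)).sign : ℤ) : ℚ) +
          ((if N = s then 1 else 0) + if N + 1 = s then 1 else 0) := by
      rcases lt_trichotomy N s with h | h | h
      · rw [Int.sign_eq_neg_one_of_neg (a := (N : ℤ) - s) (by omega), if_neg h.ne]
        rcases Nat.lt_or_eq_of_le (Nat.succ_le_of_lt h) with h' | h'
        · rw [Int.sign_eq_neg_one_of_neg (by push_cast; omega), if_neg (by omega)]
          norm_num
        · rw [if_pos h', show ((N + 1 : ℕ) : ℤ) - s = 0 by omega]
          norm_num
      · subst h; simp; norm_num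
      · rw [Int.sign_eq_one_of_pos (by omega), Int.sign_eq_one_of_pos (by omega), if_neg h.ne',
          if_neg (by omega)]
        norm_num
    rw [hU]
    ring

lemma sum_one_add_sign_mul_coeff_of_vanish {h : ℚ[X]} {s m : ℕ} (hs : s < m)
    (hh : ∀ t, m ≤ t + 1 → h.coeff t = 0) :
    ∑ t ∈ Finset.range m, ((1 + ((t : ℤ) - (s : ℤ)).sign : ℤ) : ℚ) * ((X - 1) * h).coeff t =
      ((1 + X) * h).coeff s := by
  obtain ⟨N, rfl⟩ : ∃ N, m = N + 1 := ⟨m - 1, by omega⟩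
  rw [sum_one_add_sign_mul_coeff, hh N le_rfl, mul_zero, sub_zero, add_mul, one_mul, coeff_add]
  simp only [add_mul, ite_mul, one_mul, zero_mul, Finset.sum_add_distrib]
  congr 1
  · rw [Finset.sum_ite_eq' (Finset.range N)]
    split_ifs with h1
    · rfl
    · exact (hh s (by simp at h1; omega)).symm
  · cases s with
    | zero => simp
    | succ s =>
      rw [coeff_X_mul]
      simp only [add_left_inj]
      rw [Finset.sum_ite_eq' (Finset.range N), if_pos (by simp; omega)]

/-- The polynomial `x + x²`. -/
noncomputable def quadPoly : ℚ[X] := X + X ^ 2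

lemma quadPoly_pow (i : ℕ) : quadPoly ^ i = X ^ i * (1 + X) ^ i := by
  rw [quadPoly, ← mul_pow]; ring

lemma coeff_quadPoly_pow (i s : ℕ) :
    (quadPoly ^ i).coeff s = if s ≤ 2 * i then ((1 + X : ℚ[X]) ^ i).coeff (2 * i - s) else 0 := by
  rw [quadPoly_pow, coeff_X_pow_mul', coeff_one_add_X_pow, coeff_one_add_X_pow]
  split_ifs with h1 h2 h2
  · rw [← Nat.choose_symm (n := i) (k := s - i) (by omega)]
    congr 2
    omega
  · rw [Nat.choose_eq_zero_of_lt (by omega), Nat.cast_zero]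
  · rw [Nat.choose_eq_zero_of_lt (by omega), Nat.cast_zero]
  · omega

lemma coeff_quadPoly_pow_of_lt {i s : ℕ} (h : 2 * i < s) : (quadPoly ^ i).coeff s = 0 := by
  rw [coeff_quadPoly_pow, if_neg (by omega)]

/-- The polynomials `1` and `(x - 1) (x + 2) (x + x²) ^ j`. -/
noncomputable def shiftedPow : ℕ → ℚ[X]
  | 0 => 1
  | j + 1 => (X - 1) * ((X + 2) * quadPoly ^ j)

lemma shiftedPow_succ (j : ℕ) :
    shiftedPow (j + 1) = quadPoly ^ (j + 1) - (2 : ℚ) • quadPoly ^ j := by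
  rw [shiftedPow, pow_succ', smul_eq_C_mul, quadPoly]
  simp only [map_ofNat]
  ring

lemma sum_coeff_quadPoly_pow_mul_coeff {m i : ℕ} (hi : 2 * i < m) (g : ℚ[X]) :
    ∑ s ∈ Finset.range m, (quadPoly ^ i).coeff s * g.coeff s =
      (g * (1 + X) ^ i).coeff (2 * i) := by
  rw [coeff_mul, Finset.Nat.sum_antidiagonal_eq_sum_range_succ
    (fun a b => g.coeff a * ((1 + X : ℚ[X]) ^ i).coeff b)]
  symm
  refine Finset.sum_subset_zero_on_sdiff (Finset.range_subset_range.2 hi) ?_ ?_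
  · intro s hs
    simp only [Finset.mem_sdiff, Finset.mem_range, not_lt] at hs
    rw [coeff_quadPoly_pow_of_lt (by omega), zero_mul]
  · intro s hs
    rw [coeff_quadPoly_pow, if_pos (by simp at hs; omega), mul_comm]

lemma upperForm_pow_shiftedPow {m i j : ℕ} (hi : 2 * i < m) (hj : 2 * j < m) :
    upperForm m (coeffVec m (quadPoly ^ i)) (coeffVec m (shiftedPow j)) = gramEntry i j := by
  rw [upperForm_coeffVec]
  cases j with
  | zero =>
    have h : ∀ s ∈ Finset.range m, (quadPoly ^ i).coeff s * ∑ t ∈ Finset.range m,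
        ((1 + ((t : ℤ) - (s : ℤ)).sign : ℤ) : ℚ) * (shiftedPow 0).coeff t =
          (quadPoly ^ i).coeff s * (1 : ℚ[X]).coeff s := by
      intro s hs
      congr 1
      rw [Finset.sum_eq_single 0]
      · rcases Nat.eq_zero_or_pos s with rfl | h
        · simp [shiftedPow]
        · rw [Int.sign_eq_neg_one_of_neg (by omega)]
          simp [coeff_one, h.ne']
      · intro t _ ht
        simp [shiftedPow, coeff_one, ht]
      · intro h0
        simp at h0
        omega
    rw [Finset.sum_congr rfl h, sum_coeff_quadPoly_pow_mul_coeff hi, one_mul, coeff_one_add_X_pow]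
    rcases Nat.eq_zero_or_pos i with rfl | h
    · simp [gramEntry, invFact]
    · rw [Nat.choose_eq_zero_of_lt (by omega), gramEntry,
        invFact_of_neg (z := 2 * ((0 : ℕ) : ℤ) - i) (by omega)]
      simp
  | succ j =>
    have hv : ∀ t, m ≤ t + 1 → ((X + 2) * quadPoly ^ j).coeff t = 0 := by
      intro t ht
      obtain ⟨t, rfl⟩ : ∃ u, t = u + 1 := ⟨t - 1, by omega⟩
      rw [add_mul, coeff_add, coeff_X_mul, coeff_quadPoly_pow_of_lt (by omega), zero_add,
        coeff_ofNat_mul, coeff_quadPoly_pow_of_lt (by omega), mul_zero]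
    have h : ∀ s ∈ Finset.range m, (quadPoly ^ i).coeff s * ∑ t ∈ Finset.range m,
        ((1 + ((t : ℤ) - (s : ℤ)).sign : ℤ) : ℚ) * (shiftedPow (j + 1)).coeff t =
          (quadPoly ^ i).coeff s * ((1 + X) * ((X + 2) * quadPoly ^ j)).coeff s := by
      intro s hs
      rw [shiftedPow, sum_one_add_sign_mul_coeff_of_vanish (Finset.mem_range.1 hs) hv]
    have hpoly : (1 + X) * ((X + 2) * quadPoly ^ j) * (1 + X) ^ i =
        X ^ j * ((1 + X) ^ (i + j + 2) + (1 + X) ^ (i + j + 1)) := by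
      rw [quadPoly_pow]; ring
    rw [Finset.sum_congr rfl h, sum_coeff_quadPoly_pow_mul_coeff hi, hpoly, coeff_X_pow_mul']
    split_ifs with hji
    · obtain ⟨k, hk⟩ := Nat.exists_eq_add_of_le hji
      have e := invFact_sub_one (2 * j + 2 - i)
      have e1 : ((i + j + 2 : ℕ) : ℤ) - (k : ℤ) = 2 * j + 2 - i := by omega
      have e2 : ((i + j + 1 : ℕ) : ℤ) - (k : ℤ) = 2 * j + 2 - i - 1 := by omega
      have e3 : 2 * (i : ℤ) - ((j + 1 : ℕ) : ℤ) + 1 = k := by omega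
      have e4 : 2 * ((j + 1 : ℕ) : ℤ) - (i : ℤ) = 2 * j + 2 - i := by omega
      rw [hk, Nat.add_sub_cancel_left, coeff_add, coeff_one_add_X_pow, coeff_one_add_X_pow,
        choose_eq_factorial_mul_invFact, choose_eq_factorial_mul_invFact, e1, e2, e, gramEntry,
        e3, e4, Nat.factorial_succ (i + j + 1), add_assoc i j 1]
      push_cast
      ring
    · rw [gramEntry, invFact_of_neg (z := 2 * (i : ℤ) - ((j + 1 : ℕ) : ℤ) + 1) (by omega)]
      ring

lemma coordSum_coeffVec_shiftedPow {m j : ℕ} (hj : 2 * j < m) :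
    coordSum m (coeffVec m (shiftedPow j)) = if j = 0 then 1 else 0 := by
  have h : coordSum m (coeffVec m (shiftedPow j)) = (shiftedPow j).eval 1 := by
    have hdeg : (shiftedPow j).natDegree < m := by
      refine lt_of_le_of_lt ?_ hj
      cases j with
      | zero => simp [shiftedPow]
      | succ j =>
        rw [shiftedPow, quadPoly]
        compute_degree
        omega
    rw [eval_eq_sum_range' hdeg, Finset.sum_range]
    simp [coordSum, LinearMap.sum_apply, coeffVec_apply]
  rw [h]
  cases j <;> simp [shiftedPow]

/-- The coefficient vectors of `(x + x²) ^ (n - 1), …, x + x², 1`. -/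
noncomputable def powVec (m n : ℕ) (i : Fin n) : Fin m → ℚ :=
  coeffVec m (quadPoly ^ (i.rev : ℕ))

lemma vecCons_powVec (m n : ℕ) :
    Matrix.vecCons (coeffVec m (quadPoly ^ n)) (powVec m n) = powVec m (n + 1) := by
  ext i : 1
  refine Fin.cases ?_ (fun i => ?_) i <;> simp [powVec, Fin.rev_succ]

lemma minorSum_vecCons_powVec_of_lt (m : ℕ) {n j : ℕ} (hj : j < n) :
    minorSum m (n + 1) (Matrix.vecCons (coeffVec m (quadPoly ^ j)) (powVec m n)) = 0 := by
  refine AlternatingMap.map_eq_zero_of_eq _ _ (i := 0) (j := (Fin.rev ⟨j, hj⟩).succ) ?_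
    (Fin.succ_ne_zero _).symm
  rw [Matrix.cons_val_zero, Matrix.cons_val_succ, powVec, Fin.rev_rev]

lemma minorSum_vecCons_shiftedPow_of_lt (m : ℕ) {n j : ℕ} (hj : j < n) :
    minorSum m (n + 1) (Matrix.vecCons (coeffVec m (shiftedPow j)) (powVec m n)) = 0 := by
  cases j with
  | zero => simpa [shiftedPow] using minorSum_vecCons_powVec_of_lt m hj
  | succ j =>
    rw [shiftedPow_succ, map_sub, map_smul, ← AlternatingMap.curryLeft_apply_apply, map_sub,
      map_smul, AlternatingMap.sub_apply, AlternatingMap.smul_apply,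
      AlternatingMap.curryLeft_apply_apply, AlternatingMap.curryLeft_apply_apply,
      minorSum_vecCons_powVec_of_lt m hj, minorSum_vecCons_powVec_of_lt m (by omega)]
    simp

lemma minorSum_vecCons_shiftedPow_self (m n : ℕ) :
    minorSum m (n + 1) (Matrix.vecCons (coeffVec m (shiftedPow n)) (powVec m n)) =
      minorSum m (n + 1) (powVec m (n + 1)) := by
  cases n with
  | zero => rw [← vecCons_powVec, pow_zero, shiftedPow]
  | succ n =>
    rw [shiftedPow_succ, map_sub, map_smul, ← AlternatingMap.curryLeft_apply_apply, map_sub,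
      map_smul, AlternatingMap.sub_apply, AlternatingMap.smul_apply,
      AlternatingMap.curryLeft_apply_apply, AlternatingMap.curryLeft_apply_apply,
      minorSum_vecCons_powVec_of_lt m (Nat.lt_succ_self n), vecCons_powVec]
    simp

lemma orthCoeff_mul_minorSum_powVec {m n : ℕ} (hn : 1 ≤ n) (hm : 2 * n < m) :
    orthCoeff n n * minorSum m (n + 1) (powVec m (n + 1)) =
      (-1) ^ n * (orthCoeff n 0 * minorSum m n (powVec m n)) := by
  obtain ⟨k, rfl⟩ : ∃ k, n = k + 1 := ⟨n - 1, by omega⟩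
  let q : Fin m → ℚ :=
    ∑ j ∈ Finset.range (k + 1 + 1), orthCoeff (k + 1) j • coeffVec m (shiftedPow j)
  have h1 : ∀ i, upperForm m (powVec m (k + 1) i) q = 0 := by
    intro i
    rw [← sum_orthCoeff_mul_gramEntry i.rev.isLt, map_sum]
    refine Finset.sum_congr rfl fun j hj => ?_
    rw [map_smul, powVec, upperForm_pow_shiftedPow (by omega) (by simp at hj; omega), smul_eq_mul]
  have h2 : coordSum m q = orthCoeff (k + 1) 0 := by
    rw [map_sum, Finset.sum_eq_single 0]
    · rw [map_smul, coordSum_coeffVec_shiftedPow (by omega)]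
      simp
    · intro j hj hj0
      rw [map_smul, coordSum_coeffVec_shiftedPow (by simp at hj; omega), if_neg hj0, smul_zero]
    · simp
  have h3 : minorSum m (k + 1 + 1) (Matrix.vecCons q (powVec m (k + 1))) =
      orthCoeff (k + 1) (k + 1) * minorSum m (k + 1 + 1) (powVec m (k + 1 + 1)) := by
    have hsum : ∀ (s : Finset ℕ) (f : ℕ → (Fin m → ℚ) [⋀^Fin (k + 1)]→ₗ[ℚ] ℚ) (v),
        (∑ j ∈ s, f j) v = ∑ j ∈ s, f j v := by
      intro s f v
      induction s using Finset.cons_induction with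
      | empty => simp
      | cons a s ha ih => simp only [Finset.sum_cons, AlternatingMap.add_apply, ih]
    rw [← AlternatingMap.curryLeft_apply_apply, map_sum, hsum,
      Finset.sum_range_succ, Finset.sum_eq_zero]
    · rw [map_smul, AlternatingMap.smul_apply, AlternatingMap.curryLeft_apply_apply,
        minorSum_vecCons_shiftedPow_self, zero_add, smul_eq_mul]
    · intro j hj
      rw [map_smul, AlternatingMap.smul_apply, AlternatingMap.curryLeft_apply_apply,
        minorSum_vecCons_shiftedPow_of_lt m (Finset.mem_range.1 hj), smul_zero]
  have key := sum_upperForm_mul_minorSum_removeNth (powVec m (k + 1)) q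
  simp only [h1, h2, h3, zero_mul, mul_zero, Finset.sum_const_zero] at key
  linear_combination -key

lemma minorSum_powVec_succ {m n : ℕ} (hn : 1 ≤ n) (hm : 2 * n < m) :
    minorSum m (n + 1) (powVec m (n + 1)) * ((2 * n).factorial * (2 * n + 1).factorial) =
      minorSum m n (powVec m n) * (n.factorial * (3 * n + 1).factorial) := by
  have h := orthCoeff_mul_minorSum_powVec hn hm
  have hc : ((n.centralBinom : ℕ) : ℚ) * (n.factorial * n.factorial) = (2 * n).factorial := by
    have := Nat.choose_mul_factorial_mul_factorial (n := 2 * n) (k := n) (by omega)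
    rw [show 2 * n - n = n by omega, ← Nat.centralBinom_eq_two_mul_choose, mul_assoc] at this
    exact_mod_cast this
  have hn0 : ((n : ℤ) - ((0 : ℕ) : ℤ)) = (n : ℤ) := by simp
  have hnn : ((n : ℤ) - (n : ℤ)) = ((0 : ℕ) : ℤ) := by simp
  rw [orthCoeff, orthCoeff, hn0, hnn, invFact_natCast, invFact_natCast,
    show 2 * n - n = n by omega, show 2 * n + n + 1 = 3 * n + 1 by omega, show n + n = 2 * n by omega]
    at h
  have f1 : ((n.factorial : ℕ) : ℚ) ≠ 0 := by exact_mod_cast Nat.factorial_ne_zero n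
  have f2 : (((2 * n).factorial : ℕ) : ℚ) ≠ 0 := by exact_mod_cast Nat.factorial_ne_zero _
  have f3 : (((2 * n + 1).factorial : ℕ) : ℚ) ≠ 0 := by exact_mod_cast Nat.factorial_ne_zero _
  have f4 : (((3 * n + 1).factorial : ℕ) : ℚ) ≠ 0 := by exact_mod_cast Nat.factorial_ne_zero _
  simp only [pow_zero, Nat.centralBinom_zero, Nat.cast_one, Nat.factorial_zero, inv_one, add_zero,
    Nat.sub_zero, one_mul, mul_one] at h
  field_simp at h
  linear_combination n.factorial * h -
    (minorSum m (n + 1) (powVec m (n + 1)) * (2 * n + 1).factorial) * hc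

end Polynomials

section Ideals

/-- Downward closed subsets of the tetrahedron, in terms of single steps. -/
def IsDownClosed (n : ℕ) (I : Finset (ℤ × ℤ × ℤ)) : Prop :=
  ∀ a b c : ℤ, (a, b, c) ∈ I → (0 ≤ a ∧ 0 ≤ b ∧ 0 ≤ c ∧ a + b + c ≤ (n : ℤ) - 2) ∧
    (0 < a → (a - 1, b, c) ∈ I) ∧ (0 < b → (a, b - 1, c) ∈ I) ∧ (0 < c → (a + 1, b, c - 1) ∈ I)

lemma mem_V3 {n : ℕ} {a b c : ℤ} :
    (a, b, c) ∈ V3 n ↔ 0 ≤ a ∧ 0 ≤ b ∧ 0 ≤ c ∧ a + b + c ≤ (n : ℤ) - 2 := by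
  simp only [V3, Finset.mem_filter, Finset.mem_product, Finset.mem_Icc]
  omega

lemma mem_ideals3 {n : ℕ} {I : Finset (ℤ × ℤ × ℤ)} :
    I ∈ ideals3 {vr, vg, vo, vy} (V3 n) ↔ IsDownClosed n I := by
  rw [ideals3, Finset.mem_filter, Finset.mem_powerset, IsIdeal3]
  constructor
  · rintro ⟨-, hI, hdown⟩ a b c habc
    have hV := mem_V3.1 (hI habc)
    have hstep : ∀ u e, u ∈ V3 n → e ∈ ({vr, vg, vo, vy} : Set (ℤ × ℤ × ℤ)) →
        (a, b, c) = u + e → u ∈ I := fun u e hu he h =>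
      hdown u (a, b, c) ⟨hu, hI habc, .single ⟨hu, hI habc, e, he, h⟩⟩ habc
    refine ⟨hV, fun h => ?_, fun h => ?_, fun h => ?_⟩
    · exact hstep _ vr (mem_V3.2 (by omega)) (by simp) (by simp [vr])
    · exact hstep _ vg (mem_V3.2 (by omega)) (by simp) (by simp [vg])
    · exact hstep _ vo (mem_V3.2 (by omega)) (by simp) (by simp [vo])
  · intro h
    have hI : I ⊆ V3 n := fun ⟨a, b, c⟩ hp => mem_V3.2 (h a b c hp).1
    refine ⟨hI, hI, ?_⟩
    rintro u v ⟨-, -, huv⟩ hv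
    induction huv using Relation.ReflTransGen.head_induction_on with
    | refl => exact hv
    | @head x y hstep _ ih =>
      obtain ⟨hx, -, e, he, rfl⟩ := hstep
      obtain ⟨a, b, c⟩ := x
      have hx' := mem_V3.1 hx
      simp only [Set.mem_insert_iff, Set.mem_singleton_iff] at he
      rcases he with rfl | rfl | rfl | rfl
      · simpa [vr] using (h _ _ _ ih).2.1 (by simp [vr]; omega)
      · simpa [vg] using (h _ _ _ ih).2.2.1 (by simp [vg]; omega)
      · simpa [vo] using (h _ _ _ ih).2.2.2 (by simp [vo]; omega)
      · have h1 := (h _ _ _ ih).2.2.2 (by simp [vy]; omega)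
        simpa [vy] using (h _ _ _ h1).2.1 (by simp [vy]; omega)

/-- The number of points `(0, b, c)` of a downward closed set. -/
noncomputable def rowLen (I : Finset (ℤ × ℤ × ℤ)) (b : ℕ) : ℕ :=
  sInf {c : ℕ | ((0 : ℤ), (b : ℤ), (c : ℤ)) ∉ I}

namespace IsDownClosed

variable {n : ℕ} {I : Finset (ℤ × ℤ × ℤ)}

lemma mem_iff_lt_rowLen (h : IsDownClosed n I) (b c : ℕ) :
    ((0 : ℤ), (b : ℤ), (c : ℤ)) ∈ I ↔ c < rowLen I b := by
  have hne : {c : ℕ | ((0 : ℤ), (b : ℤ), (c : ℤ)) ∉ I}.Nonempty :=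
    ⟨n, fun hm => by have := (h _ _ _ hm).1; omega⟩
  refine ⟨fun hc => ?_, fun hc => not_not.1 (Nat.notMem_of_lt_sInf hc)⟩
  by_contra! hlt
  refine Nat.sInf_mem hne ?_
  change ((0 : ℤ), (b : ℤ), ((rowLen I b : ℕ) : ℤ)) ∈ I
  induction c with
  | zero => rwa [Nat.le_zero.1 hlt]
  | succ c ih =>
    rcases Nat.le_succ_iff.1 hlt with h' | h'
    · refine ih ?_ h'
      have h1 := (h _ _ _ hc).2.2.2 (by omega)
      simpa using (h _ _ _ h1).2.1 (by omega)
    · rwa [h']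

lemma rowLen_eq (h : IsDownClosed n I) {b k : ℕ}
    (hk : ∀ c : ℕ, ((0 : ℤ), (b : ℤ), (c : ℤ)) ∈ I ↔ c < k) : rowLen I b = k :=
  eq_of_forall_lt_iff fun c => by rw [← hk, h.mem_iff_lt_rowLen]

lemma rowLen_add_lt (h : IsDownClosed n I) {b : ℕ} (hb : b < n) : rowLen I b + b < n := by
  rcases Nat.eq_zero_or_pos (rowLen I b) with h0 | h0
  · omega
  · have := (h _ _ _ ((h.mem_iff_lt_rowLen b (rowLen I b - 1)).2 (by omega))).1
    omega

lemma rowLen_succ_le (h : IsDownClosed n I) (b : ℕ) : rowLen I (b + 1) ≤ rowLen I b := by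
  by_contra! hlt
  have h1 := (h _ _ _ ((h.mem_iff_lt_rowLen (b + 1) (rowLen I b)).2 hlt)).2.2.1 (by omega)
  have h2 := (h.mem_iff_lt_rowLen b (rowLen I b)).1 (by simpa using h1)
  omega

end IsDownClosed

/-- The exponents attached to an order ideal. -/
noncomputable def rowPos {n : ℕ} (I : Finset (ℤ × ℤ × ℤ)) (k : Fin n) : ℕ :=
  rowLen I k.rev + k

lemma IsDownClosed.rowPos_strictMono {n : ℕ} {I : Finset (ℤ × ℤ × ℤ)} (h : IsDownClosed n I) :
    StrictMono (rowPos I : Fin n → ℕ) := by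
  cases n with
  | zero => exact fun k => k.elim0
  | succ n =>
    refine Fin.strictMono_iff_lt_succ.2 fun k => ?_
    have := h.rowLen_succ_le (k.rev : ℕ)
    simp only [rowPos, Fin.rev_castSucc, Fin.val_succ, Fin.val_castSucc, Fin.rev_succ]
    omega

/-- The part of `I` with positive first coordinate, translated down by one. -/
noncomputable def lowerSlice (I : Finset (ℤ × ℤ × ℤ)) : Finset (ℤ × ℤ × ℤ) :=
  (I.filter fun p => 0 < p.1).image fun p => (p.1 - 1, p.2)

lemma mem_lowerSlice {I : Finset (ℤ × ℤ × ℤ)} {a b c : ℤ} :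
    (a, b, c) ∈ lowerSlice I ↔ 0 ≤ a ∧ (a + 1, b, c) ∈ I := by
  simp only [lowerSlice, Finset.mem_image, Finset.mem_filter, Prod.mk.injEq, Prod.exists]
  constructor
  · rintro ⟨x, y, z, ⟨h1, h2⟩, rfl, rfl, rfl⟩
    refine ⟨by omega, by simpa using h1⟩
  · rintro ⟨h1, h2⟩
    exact ⟨a + 1, b, c, ⟨h2, by omega⟩, by omega, rfl, rfl⟩

lemma IsDownClosed.lowerSlice {n : ℕ} {I : Finset (ℤ × ℤ × ℤ)} (h : IsDownClosed (n + 1) I) :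
    IsDownClosed n (lowerSlice I) := by
  intro a b c habc
  obtain ⟨ha, hm⟩ := mem_lowerSlice.1 habc
  obtain ⟨h1, h2, h3, h4⟩ := h _ _ _ hm
  refine ⟨by push_cast at h1; omega, fun hp => ?_, fun hp => ?_, fun hp => ?_⟩
  · exact mem_lowerSlice.2 ⟨by omega, by simpa using h2 (by omega)⟩
  · exact mem_lowerSlice.2 ⟨ha, h3 hp⟩
  · exact mem_lowerSlice.2 ⟨by omega, h4 hp⟩

lemma IsDownClosed.rowLen_lowerSlice_le {n : ℕ} {I : Finset (ℤ × ℤ × ℤ)}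
    (h : IsDownClosed (n + 1) I) (b : ℕ) :
    rowLen (_root_.lowerSlice I) b ≤ rowLen I b ∧
      rowLen I b ≤ rowLen (_root_.lowerSlice I) b + 1 := by
  constructor
  · by_contra! hlt
    have h1 := (mem_lowerSlice.1 ((h.lowerSlice.mem_iff_lt_rowLen b _).2 hlt)).2
    have h2 := (h _ _ _ h1).2.1 (by omega)
    have := (h.mem_iff_lt_rowLen b (rowLen I b)).1 (by simpa using h2)
    omega
  · by_contra! hlt
    have h1 := (h _ _ _ ((h.mem_iff_lt_rowLen b _).2 hlt)).2.2.2 (by omega)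
    have h2 : ((0 : ℤ), (b : ℤ), ((rowLen (_root_.lowerSlice I) b : ℕ) : ℤ)) ∈
        _root_.lowerSlice I :=
      mem_lowerSlice.2 ⟨le_rfl, by simpa using h1⟩
    have := (h.lowerSlice.mem_iff_lt_rowLen b _).1 h2
    omega

/-- The rows (counted from the top) in which the bottom layer of `I` exceeds the next one. -/
noncomputable def excessRows (n : ℕ) (I : Finset (ℤ × ℤ × ℤ)) : Finset (Fin n) :=
  Finset.univ.filter fun k => rowLen (lowerSlice I) k.rev < rowLen I k.rev

lemma IsDownClosed.rowLen_eq_add_excess {n : ℕ} {I : Finset (ℤ × ℤ × ℤ)}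
    (h : IsDownClosed (n + 1) I) (k : Fin n) :
    rowLen I k.rev = rowLen (_root_.lowerSlice I) k.rev + if k ∈ excessRows n I then 1 else 0 := by
  have := h.rowLen_lowerSlice_le k.rev
  simp only [excessRows, Finset.mem_filter, Finset.mem_univ, true_and]
  split_ifs <;> omega

/-- The translate of `I` up by one together with a bottom layer with prescribed row lengths. -/
noncomputable def addLayer {n : ℕ} (I : Finset (ℤ × ℤ × ℤ)) (s : Finset (Fin n)) :
    Finset (ℤ × ℤ × ℤ) :=
  I.image (fun p => (p.1 + 1, p.2)) ∪ Finset.univ.biUnion fun k : Fin n =>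
    (Finset.range (rowLen I k.rev + if k ∈ s then 1 else 0)).image
      fun c : ℕ => ((0 : ℤ), (((k.rev : Fin n) : ℕ) : ℤ), (c : ℤ))

lemma mem_addLayer {n : ℕ} {I : Finset (ℤ × ℤ × ℤ)} {s : Finset (Fin n)} {a b c : ℤ} :
    (a, b, c) ∈ addLayer I s ↔ (a - 1, b, c) ∈ I ∨ a = 0 ∧ ∃ k : Fin n,
      b = ((k.rev : Fin n) : ℕ) ∧ ∃ d : ℕ, c = d ∧ d < rowLen I k.rev + if k ∈ s then 1 else 0 := by
  simp only [addLayer, Finset.mem_union, Finset.mem_image, Finset.mem_biUnion, Finset.mem_univ,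
    true_and, Finset.mem_range, Prod.mk.injEq, Prod.exists]
  refine or_congr ⟨?_, fun h => ⟨_, _, _, h, by simp⟩⟩ ⟨?_, ?_⟩
  · rintro ⟨x, y, z, h, rfl, rfl, rfl⟩
    simpa using h
  · rintro ⟨k, d, hd, rfl, rfl, rfl⟩
    exact ⟨rfl, k, rfl, d, rfl, hd⟩
  · rintro ⟨rfl, k, rfl, d, rfl, hd⟩
    exact ⟨k, d, hd, rfl, rfl, rfl⟩

lemma IsDownClosed.strictMono_rowPos_add {n : ℕ} {I : Finset (ℤ × ℤ × ℤ)} (h : IsDownClosed n I)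
    {s : Finset (Fin n)}
    (hs : Function.Injective fun k => rowPos I k + if k ∈ s then 1 else 0) :
    StrictMono fun k => rowPos I k + if k ∈ s then 1 else 0 := by
  refine Monotone.strictMono_of_injective (fun k l hkl => ?_) hs
  rcases hkl.eq_or_lt with rfl | hlt
  · exact le_rfl
  · have := h.rowPos_strictMono hlt
    split_ifs <;> omega

lemma IsDownClosed.addLayer {n : ℕ} {I : Finset (ℤ × ℤ × ℤ)} (h : IsDownClosed n I)
    {s : Finset (Fin n)}
    (hs : Function.Injective fun k => rowPos I k + if k ∈ s then 1 else 0) :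
    IsDownClosed (n + 1) (addLayer I s) := by
  have hmono := h.strictMono_rowPos_add hs
  intro a b c habc
  rcases mem_addLayer.1 habc with hI | ⟨rfl, k, rfl, d, rfl, hd⟩
  · obtain ⟨h1, h2, h3, h4⟩ := h _ _ _ hI
    refine ⟨by push_cast; omega, fun hp => ?_, fun hp => ?_, fun hp => ?_⟩
    · rcases h1.1.eq_or_lt with ha | ha
      · obtain ⟨b', rfl⟩ := Int.eq_ofNat_of_zero_le h1.2.1
        obtain ⟨c', rfl⟩ := Int.eq_ofNat_of_zero_le h1.2.2.1
        have hlt := (h.mem_iff_lt_rowLen b' c').1 (by rw [ha]; exact hI)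
        refine mem_addLayer.2 (Or.inr ⟨ha.symm, Fin.rev ⟨b', by omega⟩, ?_, c', rfl, ?_⟩)
        · rw [Fin.rev_rev]
        · rw [Fin.rev_rev]
          exact Nat.lt_add_right _ hlt
      · exact mem_addLayer.2 (Or.inl (h2 ha))
    · exact mem_addLayer.2 (Or.inl (h3 hp))
    · exact mem_addLayer.2 (Or.inl (by simpa using h4 hp))
  · have hlen := h.rowLen_add_lt k.rev.isLt
    refine ⟨?_, fun hp => absurd hp (lt_irrefl _), fun hp => ?_, fun hp => ?_⟩
    · rw [Nat.cast_add, Nat.cast_one]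
      split_ifs at hd <;> omega
    · have hk : (k : ℕ) + 1 < n := by
        have := Fin.val_rev k
        omega
      refine mem_addLayer.2 (Or.inr ⟨rfl, ⟨k + 1, hk⟩, ?_, d, rfl, hd.trans_le ?_⟩)
      · simp only [Fin.val_rev]
        omega
      · have := hmono (show k < ⟨k + 1, hk⟩ from Fin.lt_def.2 (Nat.lt_succ_self _))
        simp only [rowPos] at this
        omega
    · refine mem_addLayer.2 (Or.inl ?_)
      have := (h.mem_iff_lt_rowLen k.rev (d - 1)).2 (by split_ifs at hd <;> omega)
      rw [Nat.cast_sub (by omega)] at this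
      simpa using this

lemma IsDownClosed.lowerSlice_addLayer {n : ℕ} {I : Finset (ℤ × ℤ × ℤ)} (h : IsDownClosed n I)
    (s : Finset (Fin n)) : _root_.lowerSlice (_root_.addLayer I s) = I := by
  ext ⟨a, b, c⟩
  rw [mem_lowerSlice, mem_addLayer, add_sub_cancel_right]
  constructor
  · rintro ⟨ha, hI | ⟨h0, -⟩⟩
    · exact hI
    · omega
  · exact fun hI => ⟨(h _ _ _ hI).1.1, Or.inl hI⟩

lemma IsDownClosed.rowLen_addLayer {n : ℕ} {I : Finset (ℤ × ℤ × ℤ)} (h : IsDownClosed n I)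
    {s : Finset (Fin n)}
    (hs : Function.Injective fun k => rowPos I k + if k ∈ s then 1 else 0) (k : Fin n) :
    rowLen (_root_.addLayer I s) k.rev = rowLen I k.rev + if k ∈ s then 1 else 0 := by
  refine (h.addLayer hs).rowLen_eq fun c => ?_
  rw [mem_addLayer]
  constructor
  · rintro (hI | ⟨-, l, hl, d, hd, hlt⟩)
    · have := (h _ _ _ hI).1.1
      omega
    · obtain rfl : k = l := Fin.rev_injective (Fin.ext (by exact_mod_cast hl))
      obtain rfl : c = d := by exact_mod_cast hd
      exact hlt
  · exact fun hc => Or.inr ⟨rfl, k, rfl, c, rfl, hc⟩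

lemma IsDownClosed.addLayer_lowerSlice {n : ℕ} {I : Finset (ℤ × ℤ × ℤ)}
    (h : IsDownClosed (n + 1) I) :
    _root_.addLayer (_root_.lowerSlice I) (excessRows n I) = I := by
  ext ⟨a, b, c⟩
  simp only [mem_addLayer, mem_lowerSlice, ← h.rowLen_eq_add_excess, sub_add_cancel]
  constructor
  · rintro (⟨-, hI⟩ | ⟨rfl, k, rfl, d, rfl, hd⟩)
    · exact hI
    · exact (h.mem_iff_lt_rowLen _ _).2 hd
  · intro hI
    have h1 := (h _ _ _ hI).1
    rcases h1.1.eq_or_lt with rfl | ha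
    · obtain ⟨b', rfl⟩ := Int.eq_ofNat_of_zero_le h1.2.1
      obtain ⟨c', rfl⟩ := Int.eq_ofNat_of_zero_le h1.2.2.1
      refine Or.inr ⟨rfl, Fin.rev ⟨b', by push_cast at h1; omega⟩, ?_, c', rfl, ?_⟩
      · rw [Fin.rev_rev]
      · rw [Fin.rev_rev]
        exact (h.mem_iff_lt_rowLen _ _).1 hI
    · exact Or.inl ⟨by omega, hI⟩

lemma IsDownClosed.rowPos_zero {n : ℕ} {I : Finset (ℤ × ℤ × ℤ)} (h : IsDownClosed (n + 1) I) :
    rowPos I (0 : Fin (n + 1)) = 0 := by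
  have := h.rowLen_add_lt (Nat.lt_succ_self n)
  simp only [rowPos, Fin.rev_zero, Fin.val_last, Fin.val_zero]
  omega

lemma IsDownClosed.rowPos_succ {n : ℕ} {I : Finset (ℤ × ℤ × ℤ)} (h : IsDownClosed (n + 1) I)
    (k : Fin n) :
    rowPos I k.succ =
      rowPos (_root_.lowerSlice I) k + (if k ∈ excessRows n I then 1 else 0) + 1 := by
  have := h.rowLen_eq_add_excess k
  simp only [rowPos, Fin.rev_succ, Fin.val_succ, Fin.val_castSucc]
  omega

end Ideals

section Counting

open Polynomial

lemma sum_ideals3_succ {M : Type*} [AddCommMonoid M] (n : ℕ) (f : (Fin (n + 1) → ℕ) → M) :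
    ∑ I ∈ ideals3 {vr, vg, vo, vy} (V3 (n + 1)), f (rowPos I) =
      ∑ I ∈ ideals3 {vr, vg, vo, vy} (V3 n), ∑ s : Finset (Fin n) with
        Function.Injective (fun k => rowPos I k + if k ∈ s then 1 else 0),
          f (Fin.cons 0 fun k => rowPos I k + (if k ∈ s then 1 else 0) + 1) := by
  rw [Finset.sum_sigma']
  refine Finset.sum_bij' (fun I _ => ⟨lowerSlice I, excessRows n I⟩) (fun p _ => addLayer p.1 p.2)
    ?_ ?_ ?_ ?_ ?_
  · intro I hI
    have h := mem_ideals3.1 hI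
    refine Finset.mem_sigma.2 ⟨mem_ideals3.2 h.lowerSlice, ?_⟩
    refine Finset.mem_filter.2 ⟨Finset.mem_univ _, fun k l hkl => ?_⟩
    refine Fin.succ_injective _ (h.rowPos_strictMono.injective ?_)
    rw [h.rowPos_succ, h.rowPos_succ]
    exact congrArg (· + 1) hkl
  · rintro ⟨I, s⟩ hp
    obtain ⟨hI, hs⟩ := Finset.mem_sigma.1 hp
    exact mem_ideals3.2 ((mem_ideals3.1 hI).addLayer (Finset.mem_filter.1 hs).2)
  · exact fun I hI => (mem_ideals3.1 hI).addLayer_lowerSlice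
  · rintro ⟨I, s⟩ hp
    obtain ⟨hI, hs⟩ := Finset.mem_sigma.1 hp
    have h := mem_ideals3.1 hI
    have hrow := h.rowLen_addLayer (Finset.mem_filter.1 hs).2
    have hslice := h.lowerSlice_addLayer s
    refine Sigma.ext hslice (heq_of_eq ?_)
    ext k
    simp only [excessRows, hslice, hrow, Finset.mem_filter, Finset.mem_univ, true_and]
    split_ifs with hk <;> simp [hk]
  · intro I hI
    have h := mem_ideals3.1 hI
    congr 1
    ext k
    refine Fin.cases ?_ (fun k => ?_) k
    · exact h.rowPos_zero
    · exact h.rowPos_succ k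

theorem sum_ideals3_alternatingMap (n : ℕ) (Ψ : ℚ[X] [⋀^Fin n]→ₗ[ℚ] ℚ) :
    ∑ I ∈ ideals3 {vr, vg, vo, vy} (V3 n), Ψ (fun k => X ^ rowPos I k) =
      Ψ fun k => quadPoly ^ (k : ℕ) := by
  induction n with
  | zero =>
    have h : ideals3 {vr, vg, vo, vy} (V3 0) = {∅} := by
      ext I
      rw [mem_ideals3, Finset.mem_singleton]
      constructor
      · intro h
        refine Finset.eq_empty_of_forall_notMem fun ⟨a, b, c⟩ hp => ?_
        have := (h _ _ _ hp).1
        omega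
      · rintro rfl a b c h
        simp at h
    rw [h, Finset.sum_singleton]
    congr 1
    ext k
    exact k.elim0
  | succ n ih =>
    have h1 : (fun k : Fin (n + 1) => quadPoly ^ (k : ℕ)) =
        Matrix.vecCons 1 fun k : Fin n => LinearMap.mulLeft ℚ quadPoly (quadPoly ^ (k : ℕ)) := by
      ext k : 1
      refine Fin.cases ?_ (fun k => ?_) k
      · simp
      · simp [pow_succ']
    have h2 := ih ((Ψ.curryLeft 1).compLinearMap (LinearMap.mulLeft ℚ quadPoly))
    simp only [AlternatingMap.compLinearMap_apply] at h2
    rw [h1, ← AlternatingMap.curryLeft_apply_apply, ← h2,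
      sum_ideals3_succ n fun e => Ψ fun k => X ^ e k]
    refine Finset.sum_congr rfl fun I _ => ?_
    have h3 : (fun k : Fin n => LinearMap.mulLeft ℚ quadPoly (X ^ rowPos I k)) =
        (fun k => X ^ (rowPos I k + 1 + 1)) + fun k => X ^ (rowPos I k + 0 + 1) := by
      ext k : 1
      simp only [LinearMap.mulLeft_apply, quadPoly, Pi.add_apply]
      ring
    have h4 : ∀ s : Finset (Fin n), s.piecewise (fun k => (X : ℚ[X]) ^ (rowPos I k + 1 + 1))
        (fun k => X ^ (rowPos I k + 0 + 1)) =
          fun k => X ^ (rowPos I k + (if k ∈ s then 1 else 0) + 1) := by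
      intro s
      ext k : 1
      by_cases hk : k ∈ s <;> simp [hk]
    rw [h3, ← AlternatingMap.coe_multilinearMap (Ψ.curryLeft 1), MultilinearMap.map_add_univ,
      AlternatingMap.coe_multilinearMap, Finset.sum_filter]
    refine Finset.sum_congr rfl fun s _ => ?_
    rw [h4]
    split_ifs with hs
    · rw [AlternatingMap.curryLeft_apply_apply]
      congr 1
      ext k : 1
      refine Fin.cases ?_ (fun k => ?_) k <;> simp
    · refine (AlternatingMap.map_eq_zero_of_not_injective _ _ fun hinj => hs fun k l hkl => ?_).symm
      refine hinj ?_
      dsimp only at hkl ⊢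
      rw [hkl]

theorem card_ideals3_eq_minorSum {m n : ℕ} (hm : 2 * n ≤ m) :
    ((ideals3 {vr, vg, vo, vy} (V3 n)).card : ℚ) = minorSum m n (powVec m n) := by
  have h := sum_ideals3_alternatingMap n
    (((minorSum m n).compLinearMap (coeffVec m)).domDomCongr Fin.revPerm)
  have h1 : (((minorSum m n).compLinearMap (coeffVec m)).domDomCongr Fin.revPerm)
      (fun k : Fin n => quadPoly ^ (k : ℕ)) = minorSum m n (powVec m n) := rfl
  rw [← h1, ← h, Finset.card_eq_sum_ones, Nat.cast_sum]
  refine Finset.sum_congr rfl fun I hI => ?_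
  have hI' := mem_ideals3.1 hI
  have hlt : ∀ k : Fin n, rowPos I k < m := fun k => by
    have := hI'.rowLen_add_lt k.rev.isLt
    rw [rowPos]
    omega
  have h2 : (((minorSum m n).compLinearMap (coeffVec m)).domDomCongr Fin.revPerm)
      (fun k : Fin n => X ^ rowPos I k) =
        minorSum m n fun k => Pi.single (⟨rowPos I k.rev, hlt k.rev⟩ : Fin m) 1 := by
    change minorSum m n (fun k => coeffVec m (X ^ rowPos I k.rev)) = _
    simp only [coeffVec_X_pow (hlt _)]
  rw [h2, minorSum_single, descSign_of_strictAnti, Nat.cast_one, Int.cast_one]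
  intro k l hkl
  exact Nat.cast_lt.2 (hI'.rowPos_strictMono (Fin.rev_lt_rev.2 hkl))

theorem card_ideals3_succ {n : ℕ} (hn : 1 ≤ n) :
    (ideals3 {vr, vg, vo, vy} (V3 (n + 1))).card * ((2 * n).factorial * (2 * n + 1).factorial) =
      (ideals3 {vr, vg, vo, vy} (V3 n)).card * (n.factorial * (3 * n + 1).factorial) := by
  have h := minorSum_powVec_succ (m := 2 * (n + 1)) hn (by omega)
  rw [← card_ideals3_eq_minorSum le_rfl, ← card_ideals3_eq_minorSum (by omega)] at h
  exact_mod_cast h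

lemma factorial_mul_prod_factorial_succ (n : ℕ) :
    n.factorial * ∏ j ∈ Finset.range (n + 1), (n + 1 + j).factorial =
      (∏ j ∈ Finset.range n, (n + j).factorial) * ((2 * n).factorial * (2 * n + 1).factorial) := by
  have h : n.factorial * ∏ j ∈ Finset.range (n + 1), (n + (j + 1)).factorial =
      (∏ j ∈ Finset.range (n + 1), (n + j).factorial) * (n + (n + 1)).factorial := by
    rw [mul_comm, ← Finset.prod_range_succ,
      Finset.prod_range_succ' (fun j => (n + j).factorial) (n + 1), add_zero]
  simp only [show ∀ j, n + 1 + j = n + (j + 1) by omega]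
  rw [h, Finset.prod_range_succ, mul_assoc, ← add_assoc n n 1, ← two_mul]

end Counting

/-- The number of order ideals of `T_n({r,g,o,y})` is given by the ASM product formula:
`|J| · ∏_{j=0}^{n-1} (n+j)! = ∏_{j=0}^{n-1} (3j+1)!`. -/
theorem stmt11 (n : ℕ) (hn : 1 ≤ n) :
    (ideals3 {vr, vg, vo, vy} (V3 n)).card * ∏ j ∈ Finset.range n, Nat.factorial (n + j) =
      ∏ j ∈ Finset.range n, Nat.factorial (3 * j + 1) := by
  induction n, hn using Nat.le_induction with
  | base =>
    have h := card_ideals3_eq_minorSum (m := 2) (n := 1) le_rfl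
    have h1 : powVec 2 1 = fun _ => Pi.single (0 : Fin 2) 1 := by
      ext i : 1
      have := coeffVec_X_pow (m := 2) (k := 0) (by norm_num)
      rw [Subsingleton.elim i 0]
      simpa [powVec] using this
    rw [h1, minorSum_single, descSign_of_strictAnti (Subsingleton.strictAnti _)] at h
    have h2 : (ideals3 {vr, vg, vo, vy} (V3 1)).card = 1 := by exact_mod_cast h
    simp [h2]
  | succ n hn ih =>
    refine Nat.eq_of_mul_eq_mul_left n.factorial_pos ?_
    rw [mul_left_comm, factorial_mul_prod_factorial_succ, mul_left_comm, card_ideals3_succ hn,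
      Finset.prod_range_succ, ← ih]
    ring
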